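/- arXiv:1808.10322 — 2 statements merged into one kernel-verified Lean document; each statement's English description precedes it below -/
import Mathlib

section
/- Let (p_r, n_r) and (p_i, n_i) be oriented points in ℝ³ with p_r = 0, where n_r, n_i are unit vectors and p_i ≠ 0, and let (p_r', n_r') = (0, n_r') and (p_i', n_i') be another such pair. If the two pairs have equal point pair features, i.e. ‖p_i‖ = ‖p_i'‖, ⟪n_r, n_i⟫ = ⟪n_r', n_i'⟫, ⟪n_r, −p_i/‖p_i‖⟫ = ⟪n_r', −p_i'/‖p_i'‖⟫, and ⟪n_i, −p_i/‖p_i‖⟫ = ⟪n_i', −p_i'/‖p_i'‖⟫, then there exists a linear isometry R ∈ O(3) (an orthogonal transformation of ℝ³) such that R n_r = n_r', R n_i = n_i', and R p_i = p_i'. -/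
open scoped RealInnerProductSpace

/-!
Equal point pair features give the triples `(n_r, n_i, p_i)` and `(n_r', n_i', p_i')` the same Gram
matrix. Linear combinations of the two triples with the same coefficients then have the same norm,
so sending one to the other is a well-defined isometry between their spans (also when the triples
are linearly dependent). In finite dimension such an isometry extends to the whole space.
-/

section RCLike

variable {𝕜 E F : Type*} [RCLike 𝕜] [SeminormedAddCommGroup E] [InnerProductSpace 𝕜 E]
  [SeminormedAddCommGroup F] [InnerProductSpace 𝕜 F]

open Finsupp Matrix

lemma gram_eq_of_norm_eq_of_inner_eq {ι : Type*} [LinearOrder ι] {v : ι → E} {w : ι → F}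
    (hnorm : ∀ i, ‖v i‖ = ‖w i‖)
    (hinner : ∀ i j, i < j → inner 𝕜 (v i) (v j) = inner 𝕜 (w i) (w j)) :
    gram 𝕜 v = gram 𝕜 w := by
  ext i j
  rw [gram_apply, gram_apply]
  rcases lt_trichotomy i j with hij | rfl | hji
  · exact hinner i j hij
  · rw [inner_self_eq_norm_sq_to_K, inner_self_eq_norm_sq_to_K, hnorm]
  · rw [← inner_conj_symm, hinner j i hji, inner_conj_symm]

lemma norm_linearCombination_eq_of_gram_eq {ι : Type*} {v : ι → E} {w : ι → F}
    (h : gram 𝕜 v = gram 𝕜 w) (c : ι →₀ 𝕜) :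
    ‖linearCombination 𝕜 v c‖ = ‖linearCombination 𝕜 w c‖ := by
  have inner_eq (i j : ι) : inner 𝕜 (v i) (v j) = inner 𝕜 (w i) (w j) := congr_fun₂ h i j
  simp only [norm_eq_sqrt_re_inner (𝕜 := 𝕜), linearCombination_apply, Finsupp.sum_inner,
    Finsupp.inner_sum, inner_smul_left, inner_smul_right, inner_eq]

end RCLike

section NormedSpace

variable {𝕜 V E F : Type*} [NormedField 𝕜] [AddCommGroup V] [Module 𝕜 V]
  [SeminormedAddCommGroup E] [NormedSpace 𝕜 E] [NormedAddCommGroup F] [NormedSpace 𝕜 F]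

lemma exists_linearIsometry_range_of_norm_eq {f : V →ₗ[𝕜] E} {g : V →ₗ[𝕜] F}
    (h : ∀ x, ‖f x‖ = ‖g x‖) :
    ∃ L : LinearMap.range f →ₗᵢ[𝕜] F, ∀ x, L (f.rangeRestrict x) = g x := by
  have apply_eq (x : V) : g.compLeftInverse f (f.rangeRestrict x) = g x :=
    g.compLeftInverse_apply_of_bdd f ⟨1, fun y ↦ by rw [one_mul, h]⟩ x (f x) rfl
  refine ⟨⟨g.compLeftInverse f, ?_⟩, apply_eq⟩
  rintro ⟨_, x, rfl⟩
  exact (congrArg norm (apply_eq x)).trans (h x).symm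

end NormedSpace

section FiniteDimensional

variable {𝕜 E : Type*} [RCLike 𝕜] [NormedAddCommGroup E] [InnerProductSpace 𝕜 E]
  [FiniteDimensional 𝕜 E]

lemma exists_linearIsometryEquiv_of_norm_eq {V : Type*} [AddCommGroup V] [Module 𝕜 V]
    {f g : V →ₗ[𝕜] E} (h : ∀ x, ‖f x‖ = ‖g x‖) :
    ∃ R : E ≃ₗᵢ[𝕜] E, ∀ x, R (f x) = g x := by
  obtain ⟨L, hL⟩ := exists_linearIsometry_range_of_norm_eq h
  exact ⟨L.extend.toLinearIsometryEquiv rfl,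
    fun x ↦ (L.extend_apply (f.rangeRestrict x)).trans (hL x)⟩

lemma exists_linearIsometryEquiv_of_gram_eq {ι : Type*} {v w : ι → E}
    (h : Matrix.gram 𝕜 v = Matrix.gram 𝕜 w) :
    ∃ R : E ≃ₗᵢ[𝕜] E, ∀ i, R (v i) = w i := by
  obtain ⟨R, hR⟩ :=
    exists_linearIsometryEquiv_of_norm_eq (norm_linearCombination_eq_of_gram_eq h)
  exact ⟨R, fun i ↦ by simpa using hR (Finsupp.single i 1)⟩

end FiniteDimensional

section Real

variable {E : Type*} [NormedAddCommGroup E] [InnerProductSpace ℝ E]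

lemma inner_eq_of_inner_inv_norm_smul_neg_eq {F : Type*} [SeminormedAddCommGroup F]
    [InnerProductSpace ℝ F] {n p : E} {n' p' : F} (hp : p ≠ 0) (hnorm : ‖p‖ = ‖p'‖)
    (h : ⟪n, ‖p‖⁻¹ • (-p)⟫ = ⟪n', ‖p'‖⁻¹ • (-p')⟫) : ⟪n, p⟫ = ⟪n', p'⟫ := by
  rw [← hnorm, real_inner_smul_right, real_inner_smul_right, inner_neg_right, inner_neg_right] at h
  exact neg_injective (mul_left_cancel₀ (inv_ne_zero (norm_ne_zero_iff.mpr hp)) h)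

theorem ppf_determines_pair_up_to_orthogonal_general [FiniteDimensional ℝ E]
    {n_r n_i p_i n_r' n_i' p_i' : E} (hnr : ‖n_r‖ = ‖n_r'‖) (hni : ‖n_i‖ = ‖n_i'‖)
    (hp : p_i ≠ 0) (hdist : ‖p_i‖ = ‖p_i'‖) (hangle_nn : ⟪n_r, n_i⟫ = ⟪n_r', n_i'⟫)
    (hangle_rd : ⟪n_r, ‖p_i‖⁻¹ • (-p_i)⟫ = ⟪n_r', ‖p_i'‖⁻¹ • (-p_i')⟫)
    (hangle_id : ⟪n_i, ‖p_i‖⁻¹ • (-p_i)⟫ = ⟪n_i', ‖p_i'‖⁻¹ • (-p_i')⟫) :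
    ∃ R : E ≃ₗᵢ[ℝ] E, R n_r = n_r' ∧ R n_i = n_i' ∧ R p_i = p_i' := by
  have hrp : ⟪n_r, p_i⟫ = ⟪n_r', p_i'⟫ :=
    inner_eq_of_inner_inv_norm_smul_neg_eq hp hdist hangle_rd
  have hip : ⟪n_i, p_i⟫ = ⟪n_i', p_i'⟫ :=
    inner_eq_of_inner_inv_norm_smul_neg_eq hp hdist hangle_id
  have hgram : Matrix.gram ℝ ![n_r, n_i, p_i] = Matrix.gram ℝ ![n_r', n_i', p_i'] := by
    apply gram_eq_of_norm_eq_of_inner_eq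
    · simp [Fin.forall_fin_succ, hnr, hni, hdist]
    · simp [Fin.forall_fin_succ, hangle_nn, hrp, hip]
  obtain ⟨R, hR⟩ := exists_linearIsometryEquiv_of_gram_eq hgram
  exact ⟨R, hR 0, hR 1, hR 2⟩

end Real

/-- Equal point pair features (with reference points at the origin) imply the
two oriented point pairs are related by a linear isometry (orthogonal transformation) of ℝ³. -/
theorem ppf_determines_pair_up_to_orthogonal
    (n_r n_i p_i n_r' n_i' p_i' : EuclideanSpace ℝ (Fin 3))
    (hnr : ‖n_r‖ = 1) (hni : ‖n_i‖ = 1) (hnr' : ‖n_r'‖ = 1) (hni' : ‖n_i'‖ = 1)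
    (hp : p_i ≠ 0) (hp' : p_i' ≠ 0)
    (hdist : ‖p_i‖ = ‖p_i'‖)
    (hangle_nn : ⟪n_r, n_i⟫ = ⟪n_r', n_i'⟫)
    (hangle_rd : ⟪n_r, ‖p_i‖⁻¹ • (-p_i)⟫ = ⟪n_r', ‖p_i'‖⁻¹ • (-p_i')⟫)
    (hangle_id : ⟪n_i, ‖p_i‖⁻¹ • (-p_i)⟫ = ⟪n_i', ‖p_i'‖⁻¹ • (-p_i')⟫) :
    ∃ R : EuclideanSpace ℝ (Fin 3) ≃ₗᵢ[ℝ] EuclideanSpace ℝ (Fin 3),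
      R n_r = n_r' ∧ R n_i = n_i' ∧ R p_i = p_i' :=
  ppf_determines_pair_up_to_orthogonal_general (hnr.trans hnr'.symm) (hni.trans hni'.symm)
    hp hdist hangle_nn hangle_rd hangle_id
end

section
/- Let (0, n_r, p_i, n_i) and (0, n_r, p_i', n_i') be two configurations in ℝ³ with the same reference normal n_r (a unit vector), with n_i, n_i' unit vectors and p_i, p_i' ≠ 0. If the two configurations have equal point pair features, i.e. ‖p_i‖ = ‖p_i'‖, ⟪n_r, n_i⟫ = ⟪n_r, n_i'⟫, ⟪n_r, −p_i/‖p_i‖⟫ = ⟪n_r, −p_i'/‖p_i'‖⟫, and ⟪n_i, −p_i/‖p_i‖⟫ = ⟪n_i', −p_i'/‖p_i'‖⟫, then there exists an orthogonal transformation R ∈ O(3) fixing the reference normal, R n_r = n_r, such that R n_i = n_i' and R p_i = p_i'. In other words, the PPF determines the oriented point pair up to a rotation or reflection about the normal of the reference point. -/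
open scoped RealInnerProductSpace

/-!
Two families of vectors in a finite-dimensional inner product space with the same Gram matrix differ
by a linear isometry: linear combinations with equal coefficients have equal norms, so the map
`∑ cᵢ vᵢ ↦ ∑ cᵢ wᵢ` is a well-defined isometry on the span of `v`, and it extends to the whole
space. Configurations with equal point pair features are triples `(n_r, n_i, p_i)` and
`(n_r, n_i', p_i')` with equal Gram matrices.
-/

section Isometry

variable {𝕜 E V W ι : Type*} [RCLike 𝕜]

theorem norm_linearCombination_eq_of_gram_eq_s1
    [SeminormedAddCommGroup V] [InnerProductSpace 𝕜 V]
    [SeminormedAddCommGroup W] [InnerProductSpace 𝕜 W] {v : ι → V} {w : ι → W}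
    (h : Matrix.gram 𝕜 v = Matrix.gram 𝕜 w) (c : ι →₀ 𝕜) :
    ‖Finsupp.linearCombination 𝕜 v c‖ = ‖Finsupp.linearCombination 𝕜 w c‖ := by
  have inner_eq (i j : ι) : inner 𝕜 (v i) (v j) = inner 𝕜 (w i) (w j) := congrFun₂ h i j
  simp only [norm_eq_sqrt_re_inner (𝕜 := 𝕜), Finsupp.linearCombination_apply, Finsupp.sum,
    sum_inner, inner_sum, inner_smul_left, inner_smul_right, inner_eq]

variable [NormedAddCommGroup V] [InnerProductSpace 𝕜 V] [FiniteDimensional 𝕜 V]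

theorem exists_linearIsometryEquiv_apply_eq_of_norm_eq [AddCommGroup E] [Module 𝕜 E]
    {f g : E →ₗ[𝕜] V} (h : ∀ x, ‖f x‖ = ‖g x‖) :
    ∃ R : V ≃ₗᵢ[𝕜] V, ∀ x, R (f x) = g x := by
  obtain ⟨s, hs⟩ := f.rangeRestrict.exists_rightInverse_of_surjective f.range_rangeRestrict
  have f_section (y : f.range) : f (s y) = y := congrArg Subtype.val (LinearMap.congr_fun hs y)
  have g_section (x : E) : g (s (f.rangeRestrict x)) = g x := by
    rw [← sub_eq_zero, ← map_sub, ← norm_eq_zero, ← h, map_sub, f_section, norm_eq_zero]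
    exact sub_self (f x)
  let L : f.range →ₗᵢ[𝕜] V :=
    { toLinearMap := g ∘ₗ s
      norm_map' := fun y ↦ by
        rw [LinearMap.comp_apply, ← h, f_section, Submodule.coe_norm] }
  exact ⟨L.extend.toLinearIsometryEquiv rfl,
    fun x ↦ (L.extend_apply (f.rangeRestrict x)).trans (g_section x)⟩

theorem gram_eq_iff_exists_linearIsometryEquiv {v w : ι → V} :
    Matrix.gram 𝕜 v = Matrix.gram 𝕜 w ↔ ∃ R : V ≃ₗᵢ[𝕜] V, ∀ i, R (v i) = w i := by
  constructor
  · intro h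
    obtain ⟨R, hR⟩ :=
      exists_linearIsometryEquiv_apply_eq_of_norm_eq (norm_linearCombination_eq_of_gram_eq_s1 h)
    exact ⟨R, fun i ↦ by simpa using hR (Finsupp.single i 1)⟩
  · rintro ⟨R, hR⟩
    ext i j
    simp only [Matrix.gram_apply, ← hR, R.inner_map_map]

end Isometry

section PointPair

variable {V : Type*} [NormedAddCommGroup V] [InnerProductSpace ℝ V]

theorem norm_mul_real_inner_normalized_neg (x y : V) :
    ‖y‖ * ⟪x, ‖y‖⁻¹ • (-y)⟫ = -⟪x, y⟫ := by
  calc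
    ‖y‖ * ⟪x, ‖y‖⁻¹ • (-y)⟫ = -⟪x, ‖y‖ • NormedSpace.normalize y⟫ := by
      rw [NormedSpace.normalize, smul_neg, inner_neg_right, real_inner_smul_right _ _ ‖y‖, mul_neg]
    _ = -⟪x, y⟫ := by rw [NormedSpace.norm_smul_normalize]

theorem real_inner_eq_of_inner_normalized_neg_eq {n p n' p' : V} (hnorm : ‖p‖ = ‖p'‖)
    (hangle : ⟪n, ‖p‖⁻¹ • (-p)⟫ = ⟪n', ‖p'‖⁻¹ • (-p')⟫) : ⟪n, p⟫ = ⟪n', p'⟫ := by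
  rw [← neg_inj, ← norm_mul_real_inner_normalized_neg, ← norm_mul_real_inner_normalized_neg,
    hangle, hnorm]

theorem ppf_determines_pair_up_to_rotation_about_normal_general [FiniteDimensional ℝ V]
    (n_r n_i p_i n_i' p_i' : V)
    (hni : ‖n_i‖ = ‖n_i'‖)
    (hdist : ‖p_i‖ = ‖p_i'‖)
    (hangle_nn : ⟪n_r, n_i⟫ = ⟪n_r, n_i'⟫)
    (hangle_rd : ⟪n_r, ‖p_i‖⁻¹ • (-p_i)⟫ = ⟪n_r, ‖p_i'‖⁻¹ • (-p_i')⟫)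
    (hangle_id : ⟪n_i, ‖p_i‖⁻¹ • (-p_i)⟫ = ⟪n_i', ‖p_i'‖⁻¹ • (-p_i')⟫) :
    ∃ R : V ≃ₗᵢ[ℝ] V, R n_r = n_r ∧ R n_i = n_i' ∧ R p_i = p_i' := by
  have inner_rp : ⟪n_r, p_i⟫ = ⟪n_r, p_i'⟫ :=
    real_inner_eq_of_inner_normalized_neg_eq hdist hangle_rd
  have inner_ip : ⟪n_i, p_i⟫ = ⟪n_i', p_i'⟫ :=
    real_inner_eq_of_inner_normalized_neg_eq hdist hangle_id
  have gram_eq : Matrix.gram ℝ ![n_r, n_i, p_i] = Matrix.gram ℝ ![n_r, n_i', p_i'] := by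
    ext i j
    fin_cases i <;> fin_cases j <;>
      simp [real_inner_comm, hni, hdist, hangle_nn, inner_rp, inner_ip]
  obtain ⟨R, hR⟩ := gram_eq_iff_exists_linearIsometryEquiv.mp gram_eq
  exact ⟨R, hR 0, hR 1, hR 2⟩

end PointPair

/-- With a common reference normal, equal point pair features imply the two
configurations are related by an orthogonal transformation fixing the reference normal,
i.e. a rotation or reflection about the normal of the reference point. -/
theorem ppf_determines_pair_up_to_rotation_about_normal
    (n_r n_i p_i n_i' p_i' : EuclideanSpace ℝ (Fin 3))
    (hnr : ‖n_r‖ = 1) (hni : ‖n_i‖ = 1) (hni' : ‖n_i'‖ = 1)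
    (hp : p_i ≠ 0) (hp' : p_i' ≠ 0)
    (hdist : ‖p_i‖ = ‖p_i'‖)
    (hangle_nn : ⟪n_r, n_i⟫ = ⟪n_r, n_i'⟫)
    (hangle_rd : ⟪n_r, ‖p_i‖⁻¹ • (-p_i)⟫ = ⟪n_r, ‖p_i'‖⁻¹ • (-p_i')⟫)
    (hangle_id : ⟪n_i, ‖p_i‖⁻¹ • (-p_i)⟫ = ⟪n_i', ‖p_i'‖⁻¹ • (-p_i')⟫) :
    ∃ R : EuclideanSpace ℝ (Fin 3) ≃ₗᵢ[ℝ] EuclideanSpace ℝ (Fin 3),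
      R n_r = n_r ∧ R n_i = n_i' ∧ R p_i = p_i' := by
  exact ppf_determines_pair_up_to_rotation_about_normal_general n_r n_i p_i n_i' p_i'
    (hni.trans hni'.symm) hdist hangle_nn hangle_rd hangle_id
end
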